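/- A linear map L : 𝒮ⁿ → 𝒮ⁿ on the space of n×n real symmetric matrices satisfies L(COPₙ) = COPₙ if and only if there exists a nonnegative monomial matrix M ∈ Mₙ(ℝ) such that L(X) = M X Mᵗ for all X ∈ 𝒮ⁿ. -/

import Mathlib

open Matrix

/-- The space `𝒮ⁿ` of `n × n` real symmetric matrices, as a submodule of the matrices. -/
def SymMat (n : ℕ) : Submodule ℝ (Matrix (Fin n) (Fin n) ℝ) where
  carrier := {A | A.IsSymm}
  add_mem' ha hb := ha.add hb
  zero_mem' := Matrix.isSymm_zero
  smul_mem' c A hA := hA.smul c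

/-- The cone of copositive matrices in `𝒮ⁿ`. -/
def COPcone (n : ℕ) : Set (SymMat n) :=
  {A | ∀ x : Fin n → ℝ, (∀ i, 0 ≤ x i) → 0 ≤ x ⬝ᵥ ((A : Matrix (Fin n) (Fin n) ℝ) *ᵥ x)}

/-- A monomial matrix: exactly one nonzero entry in each row and in each column. -/
def IsMonomial {n : ℕ} (M : Matrix (Fin n) (Fin n) ℝ) : Prop :=
  (∀ i, ∃! j, M i j ≠ 0) ∧ (∀ j, ∃! i, M i j ≠ 0)

/-!
Let `L` preserve the copositive cone, so that it is bijective. For nonzero `x ≥ 0` the form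
`2 (|x|² I - x xᵗ)` is copositive and vanishes at `x`, hence it lies on the boundary of the cone,
and so does its preimage under `L`: the preimage vanishes at some nonzero `y ≥ 0`. The functional
`A ↦ yᵗ L⁻¹(A) y` is nonnegative on squares and kills `|x|² I - x xᵗ`, which forces it to be a
multiple of `A ↦ xᵗ A x`. After rescaling `y`, this says `xᵗ L(A) x = yᵗ A y` for all `A`.

Let `aᵢ` be the vector `y` obtained from `x = eᵢ`. The vectors `eᵢ + t eⱼ` with `t > 0` turn the
entry `L(A)ᵢⱼ` into the middle term of a pencil of forms of rank one, whence
`L(A)ᵢⱼ = ± aᵢᵗ A aⱼ`, and copositivity rules out the minus sign. Thus `L(A) = M A Mᵗ` where `M`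
has rows `aᵢ`. Likewise for `L⁻¹`, so `M` is nonnegative with nonnegative inverse, that is,
monomial.
-/

section LinearAlgebra

variable {K : Type*} [Field K] {V : Type*} [AddCommGroup V] [Module K V]

theorem surjective_pi_of_linearIndependent {ι : Type*} [Finite ι] {f : ι → Module.Dual K V}
    (hf : LinearIndependent K f) : Function.Surjective (LinearMap.pi f) := by
  have hcoe : LinearIndependent K fun i => (f i : V → K) :=
    hf.map' (LinearMap.ltoFun K V K K) (LinearMap.ker_eq_bot.2 DFunLike.coe_injective)
  rw [← LinearMap.range_eq_top, ← span_flip_eq_top_iff_linearIndependent.2 hcoe,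
    ← Submodule.span_eq (LinearMap.range (LinearMap.pi f))]
  rfl

theorem linearIndependent_pair_dotProductEquiv {ι : Type*} [Fintype ι] [DecidableEq ι]
    {x y : ι → K} :
    LinearIndependent K ![dotProductEquiv K ι x, dotProductEquiv K ι y] ↔
      LinearIndependent K ![x, y] := by
  simp only [LinearIndependent.pair_iff, ← map_smul, ← map_add,
    map_eq_zero_iff _ (dotProductEquiv K ι).injective]

variable [LinearOrder K] [IsStrictOrderedRing K]

theorem exists_sign_of_rankOne_pencil {α β : Module.Dual K V}
    (hαβ : LinearIndependent K ![α, β]) {T : V → V → K}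
    (hT : ∀ t : K, 0 < t → ∃ ω : V → K, ∀ u v,
      α u * α v + t * T u v + t ^ 2 * (β u * β v) = ω u * ω v) :
    ∃ ε : K, ε * ε = 1 ∧ ∀ u v, T u v = ε * (α u * β v + β u * α v) := by
  obtain ⟨p, hp⟩ := surjective_pi_of_linearIndependent hαβ ![1, 0]
  obtain ⟨q, hq⟩ := surjective_pi_of_linearIndependent hαβ ![0, 1]
  have hαp : α p = 1 := congrFun hp 0
  have hβp : β p = 0 := congrFun hp 1
  have hαq : α q = 0 := congrFun hq 0
  have hβq : β q = 1 := congrFun hq 1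
  -- The `2 × 2` minor, on rows `u, p` and columns `v, p`, of the rank one form of parameter `t`.
  have minor (t : K) (ht : 0 < t) (u v : V) :
      (α u * α v + t * T u v + t ^ 2 * (β u * β v)) * (1 + t * T p p) =
        (α u + t * T u p) * (α v + t * T v p) := by
    obtain ⟨ω, hω⟩ := hT t ht
    have hup := hω u p
    have hvp := hω v p
    have hpp := hω p p
    simp only [hαp, hβp, mul_one, mul_zero, add_zero] at hup hvp hpp
    rw [hω, hup, hvp, hpp]
    ring
  have hpp : T p p = 0 := by
    have h₁ := minor 1 one_pos q q
    have h₂ := minor 2 two_pos q q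
    have h₃ := minor 3 three_pos q q
    simp only [hαq, hβq] at h₁ h₂ h₃
    linarith
  have quadratic (u v : V) : β u * β v = T u p * T v p := by
    have h₁ := minor 1 one_pos u v
    have h₂ := minor 2 two_pos u v
    rw [hpp] at h₁ h₂
    linarith
  have linear (u v : V) : T u v = α u * T v p + T u p * α v := by
    have h₁ := minor 1 one_pos u v
    rw [hpp] at h₁
    linarith [quadratic u v]
  have hsq : T q p * T q p = 1 := by rw [← quadratic, hβq, one_mul]
  have hβ (u : V) : T u p = T q p * β u := by
    linear_combination T q p * β u * hβq - T q p * quadratic u q - T u p * hsq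
  exact ⟨T q p, hsq, fun u v => by rw [linear, hβ u, hβ v]; ring⟩

end LinearAlgebra

section NonnegativeMatrix

variable {ι R : Type*} [Fintype ι] [DecidableEq ι] [Ring R] [LinearOrder R]
  [IsStrictOrderedRing R] {M N : Matrix ι ι R}

theorem apply_eq_zero_of_mul_eq_one (hM : ∀ i j, 0 ≤ M i j) (hN : ∀ i j, 0 ≤ N i j)
    (hMN : M * N = 1) {i j k : ι} (hij : M i j ≠ 0) (hki : k ≠ i) : N j k = 0 := by
  have hsum : ∑ l, M i l * N l k = 0 := by
    rw [← mul_apply, hMN, one_apply_ne hki.symm]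
  have hterm := (Finset.sum_eq_zero_iff_of_nonneg
    fun l _ => mul_nonneg (hM i l) (hN l k)).1 hsum j (Finset.mem_univ j)
  exact (mul_eq_zero.1 hterm).resolve_left hij

theorem existsUnique_apply_ne_zero_of_mul_eq_one (hM : ∀ i j, 0 ≤ M i j)
    (hN : ∀ i j, 0 ≤ N i j) (hMN : M * N = 1) (hNM : N * M = 1) (i : ι) :
    ∃! j, M i j ≠ 0 := by
  obtain ⟨j, hj⟩ : ∃ j, M i j ≠ 0 := by
    by_contra! hrow
    simpa [mul_apply, hrow] using congr_fun₂ hMN i i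
  have hNM_row (l : ι) : N j i * M i l = (1 : Matrix ι ι R) j l := by
    rw [← hNM, mul_apply, Finset.sum_eq_single_of_mem i (Finset.mem_univ i)]
    intro k _ hki
    rw [apply_eq_zero_of_mul_eq_one hM hN hMN hj hki, zero_mul]
  have hNji : N j i ≠ 0 := fun h => by simpa [h] using hNM_row j
  refine ⟨j, hj, fun l hl => ?_⟩
  by_contra hlj
  exact mul_ne_zero hNji hl (by rw [hNM_row, one_apply_ne (Ne.symm hlj)])

theorem eq_one_of_mul_single_mul_transpose (hM : ∀ i j, 0 ≤ M i j)
    (h : ∀ k, M * single k k 1 * Mᵀ = single k k 1) : M = 1 := by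
  ext i k
  have hsq : M i k ^ 2 = if i = k then 1 else 0 := by
    simpa [sq, mul_apply, single_apply, ite_and, eq_comm] using congr_fun₂ (h k) i i
  rw [one_apply]
  split_ifs at hsq ⊢
  · exact (pow_eq_one_iff_of_nonneg (hM i k) two_ne_zero).1 hsq
  · exact pow_eq_zero_iff two_ne_zero |>.1 hsq

end NonnegativeMatrix

namespace IsMonomial

variable {n : ℕ} {M N : Matrix (Fin n) (Fin n) ℝ}

theorem of_mul_eq_one (hM : ∀ i j, 0 ≤ M i j) (hN : ∀ i j, 0 ≤ N i j) (hMN : M * N = 1) :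
    IsMonomial M := by
  have hNM : N * M = 1 := mul_eq_one_comm.1 hMN
  refine ⟨existsUnique_apply_ne_zero_of_mul_eq_one hM hN hMN hNM, ?_⟩
  refine existsUnique_apply_ne_zero_of_mul_eq_one (M := Mᵀ) (N := Nᵀ) (fun i j => hM j i)
    (fun i j => hN j i) ?_ ?_
  · rw [← transpose_mul, hNM, transpose_one]
  · rw [← transpose_mul, hMN, transpose_one]

theorem mul_transpose_map_inv (hM : IsMonomial M) : M * Mᵀ.map (·⁻¹) = 1 := by
  ext i k
  rw [mul_apply, one_apply]
  split_ifs with hik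
  · subst hik
    obtain ⟨j, hj, hunique⟩ := hM.1 i
    rw [Finset.sum_eq_single_of_mem j (Finset.mem_univ j)]
    · exact mul_inv_cancel₀ hj
    · intro l _ hlj
      simp [not_not.1 (mt (hunique l) hlj)]
  · refine Finset.sum_eq_zero fun j _ => ?_
    by_contra hne
    have hij : M i j ≠ 0 := left_ne_zero_of_mul hne
    have hkj : M k j ≠ 0 := fun h => hne (by simp [h])
    exact hik ((hM.2 j).unique hij hkj)

end IsMonomial

namespace SymMat

variable {n : ℕ}

theorem apply_comm (A : SymMat n) (i j : Fin n) : A.1 i j = A.1 j i :=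
  IsSymm.apply A.2 j i

/-- The projection `X ↦ (X + Xᵀ) / 2` of the square matrices onto the symmetric ones. -/
noncomputable def symmetrize (n : ℕ) : Matrix (Fin n) (Fin n) ℝ →ₗ[ℝ] SymMat n where
  toFun X := ⟨(2⁻¹ : ℝ) • (X + Xᵀ), (isSymm_add_transpose_self X).smul _⟩
  map_add' X Y := by ext; simp; ring
  map_smul' c X := by ext; simp; ring

theorem symmetrize_coe (A : SymMat n) : symmetrize n A = A := by
  ext i j
  simp only [symmetrize, LinearMap.coe_mk, AddHom.coe_mk, Matrix.smul_apply, Matrix.add_apply,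
    transpose_apply, smul_eq_mul, apply_comm A j i]
  ring

/-- The symmetrised product `(u vᵗ + v uᵗ) / 2` of two vectors. -/
noncomputable def symProd : (Fin n → ℝ) →ₗ[ℝ] (Fin n → ℝ) →ₗ[ℝ] SymMat n :=
  (vecMulVecBilin ℝ ℝ).compr₂ (symmetrize n)

theorem coe_symProd (u v : Fin n → ℝ) :
    (symProd u v : Matrix (Fin n) (Fin n) ℝ) = (2⁻¹ : ℝ) • (vecMulVec u v + vecMulVec v u) := by
  rw [← transpose_vecMulVec u v]
  rfl

theorem symProd_comm (u v : Fin n → ℝ) : symProd u v = symProd v u := by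
  ext
  rw [coe_symProd, coe_symProd, add_comm]

theorem linearMap_ext {E : Type*} [AddCommMonoid E] [Module ℝ E] {f g : SymMat n →ₗ[ℝ] E}
    (h : ∀ i j, f (symProd (Pi.single i 1) (Pi.single j 1)) =
      g (symProd (Pi.single i 1) (Pi.single j 1))) : f = g := by
  have hsymm : f ∘ₗ symmetrize n = g ∘ₗ symmetrize n := by
    refine Matrix.ext_linearMap ℝ fun i j => LinearMap.ext_ring ?_
    simpa [symProd, single_eq_single_vecMulVec_single] using h i j
  ext A
  simpa only [LinearMap.comp_apply, symmetrize_coe] using LinearMap.congr_fun hsymm A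

/-- The value `xᵗ A y` of the bilinear form of `A`, as a linear functional of the symmetric
matrix `A` depending bilinearly on `x` and `y`. -/
def eval : (Fin n → ℝ) →ₗ[ℝ] (Fin n → ℝ) →ₗ[ℝ] Module.Dual ℝ (SymMat n) :=
  LinearMap.mk₂ ℝ
    (fun x y =>
      { toFun A := x ⬝ᵥ (A.1 *ᵥ y)
        map_add' A B := by simp [add_mulVec]
        map_smul' c A := by simp [smul_mulVec] })
    (fun x x' y => by ext; simp)
    (fun c x y => by ext; simp)
    (fun x y y' => by ext; simp [mulVec_add])
    (fun c x y => by ext; simp [mulVec_smul])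

theorem eval_apply (x y : Fin n → ℝ) (A : SymMat n) : eval x y A = x ⬝ᵥ (A.1 *ᵥ y) := rfl

theorem eval_comm (x y : Fin n → ℝ) : eval x y = eval y x := by
  ext A
  rw [eval_apply, eval_apply, dotProduct_mulVec, dotProduct_comm, ← mulVec_transpose,
    IsSymm.eq A.2]

theorem eval_single (i j : Fin n) (A : SymMat n) :
    eval (Pi.single i 1) (Pi.single j 1) A = A.1 i j := by
  simp [eval_apply]

theorem eval_symProd (x y u v : Fin n → ℝ) :
    eval x y (symProd u v) = ((x ⬝ᵥ u) * (v ⬝ᵥ y) + (x ⬝ᵥ v) * (u ⬝ᵥ y)) / 2 := by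
  simp only [eval_apply, coe_symProd, smul_mulVec, add_mulVec, vecMulVec_mulVec, dotProduct_smul,
    dotProduct_add, smul_eq_mul, MulOpposite.smul_eq_mul_unop, MulOpposite.unop_op]
  ring

theorem eval_self_symProd_self (x u : Fin n → ℝ) : eval x x (symProd u u) = (x ⬝ᵥ u) ^ 2 := by
  rw [eval_symProd, dotProduct_comm u x]
  ring

theorem eval_self_ne_zero {x : Fin n → ℝ} (hx : x ≠ 0) : eval x x ≠ 0 := fun h => by
  have := LinearMap.congr_fun h (symProd x x)
  simp [eval_self_symProd_self, hx] at this

theorem eval_self_add (x y : Fin n → ℝ) :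
    eval (x + y) (x + y) = eval x x + 2 • eval x y + eval y y := by
  simp only [map_add, LinearMap.add_apply, eval_comm y x]
  abel

theorem eval_self_smul (c : ℝ) (x : Fin n → ℝ) : eval (c • x) (c • x) = c ^ 2 • eval x x := by
  simp only [map_smul, LinearMap.smul_apply, smul_smul, sq]

/-- The congruence `A ↦ M A Mᵗ` of symmetric matrices. -/
def congruence (M : Matrix (Fin n) (Fin n) ℝ) : SymMat n →ₗ[ℝ] SymMat n where
  toFun A := ⟨M * A.1 * Mᵀ, by
    change (M * A.1 * Mᵀ)ᵀ = M * A.1 * Mᵀ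
    rw [transpose_mul, transpose_mul, transpose_transpose, IsSymm.eq A.2, Matrix.mul_assoc]⟩
  map_add' A B := by ext : 1; simp [mul_add, add_mul]
  map_smul' c A := by ext : 1; simp

theorem coe_congruence (M : Matrix (Fin n) (Fin n) ℝ) (A : SymMat n) :
    (congruence M A : Matrix (Fin n) (Fin n) ℝ) = M * A * Mᵀ := rfl

theorem congruence_one : congruence (1 : Matrix (Fin n) (Fin n) ℝ) = LinearMap.id := by
  ext : 2
  simp [coe_congruence]

theorem congruence_mul (M N : Matrix (Fin n) (Fin n) ℝ) :
    congruence (M * N) = congruence M ∘ₗ congruence N := by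
  ext : 2
  simp only [coe_congruence, LinearMap.comp_apply, transpose_mul, Matrix.mul_assoc]

theorem eval_congruence (M : Matrix (Fin n) (Fin n) ℝ) (x y : Fin n → ℝ) (A : SymMat n) :
    eval x y (congruence M A) = eval (x ᵥ* M) (y ᵥ* M) A := by
  rw [eval_apply, eval_apply, coe_congruence, ← mulVec_mulVec, ← mulVec_mulVec,
    dotProduct_mulVec, mulVec_transpose]

theorem eq_one_of_congruence_eq_id {M : Matrix (Fin n) (Fin n) ℝ} (hM : ∀ i j, 0 ≤ M i j)
    (h : congruence M = LinearMap.id) : M = 1 := by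
  refine eq_one_of_mul_single_mul_transpose hM fun k => ?_
  have hsymm : (single k k (1 : ℝ)).IsSymm := transpose_single k k 1
  exact congrArg Subtype.val (LinearMap.congr_fun h ⟨_, hsymm⟩)

/-- The sum of the squares `w wᵗ` over the vectors `w = xᵢ eⱼ - xⱼ eᵢ`, which span `x^⊥`. By
Lagrange's identity it is `2 ((xᵗ x) I - x xᵗ)`. -/
noncomputable def lagrange (x : Fin n → ℝ) : SymMat n :=
  ∑ i, ∑ j, symProd (x i • Pi.single j 1 - x j • Pi.single i 1)
    (x i • Pi.single j 1 - x j • Pi.single i 1)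

theorem eval_self_lagrange (x : Fin n → ℝ) : eval x x (lagrange x) = 0 := by
  simp only [lagrange, map_sum]
  refine Finset.sum_eq_zero fun i _ => Finset.sum_eq_zero fun j _ => ?_
  rw [eval_self_symProd_self, dotProduct_sub, dotProduct_smul, dotProduct_smul,
    dotProduct_single_one, dotProduct_single_one, smul_eq_mul, smul_eq_mul, mul_comm, sub_self,
    zero_pow two_ne_zero]

section Functional

variable {x : Fin n → ℝ} {θ : Module.Dual ℝ (SymMat n)}

theorem smul_apply_symProd_eq (hθ : ∀ u, 0 ≤ θ (symProd u u)) (hx : θ (lagrange x) = 0)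
    (i j : Fin n) (v : Fin n → ℝ) :
    x i * θ (symProd (Pi.single j 1) v) = x j * θ (symProd (Pi.single i 1) v) := by
  set w := x i • Pi.single j 1 - x j • Pi.single i 1 with hw
  have hsum := hx
  simp only [lagrange, map_sum] at hsum
  have hrow := (Finset.sum_eq_zero_iff_of_nonneg
    fun k _ => Finset.sum_nonneg fun l _ => hθ _).1 hsum i (Finset.mem_univ i)
  have hww : θ (symProd w w) = 0 :=
    (Finset.sum_eq_zero_iff_of_nonneg fun l _ => hθ _).1 hrow j (Finset.mem_univ j)
  have hker : w ∈ LinearMap.ker (symProd.compr₂ θ) :=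
    (LinearMap.BilinForm.apply_apply_same_eq_zero_iff (symProd.compr₂ θ) hθ
      ⟨fun u v => congrArg θ (symProd_comm u v)⟩).1 hww
  have hwv : θ (symProd w v) = 0 := LinearMap.congr_fun (LinearMap.mem_ker.1 hker) v
  simpa only [hw, map_sub, map_smul, LinearMap.sub_apply, LinearMap.smul_apply, smul_eq_mul,
    sub_eq_zero] using hwv

theorem exists_eq_smul_eval_of_apply_lagrange_eq_zero (hx₀ : x ≠ 0)
    (hθ : ∀ u, 0 ≤ θ (symProd u u)) (hx : θ (lagrange x) = 0) :
    ∃ c : ℝ, 0 ≤ c ∧ θ = c • eval x x := by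
  obtain ⟨k, hk⟩ := Function.ne_iff.1 hx₀
  rw [Pi.zero_apply] at hk
  refine ⟨θ (symProd (Pi.single k 1) (Pi.single k 1)) / x k ^ 2,
    div_nonneg (hθ _) (sq_nonneg _), linearMap_ext fun i j => ?_⟩
  have hi := smul_apply_symProd_eq hθ hx k i (Pi.single j 1)
  have hj := smul_apply_symProd_eq hθ hx k j (Pi.single k 1)
  rw [symProd_comm] at hj
  rw [LinearMap.smul_apply, eval_symProd, dotProduct_single_one, dotProduct_single_one,
    single_one_dotProduct, single_one_dotProduct, smul_eq_mul]
  field_simp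
  linear_combination 2 * x k * hi + 2 * x i * hj

end Functional

end SymMat

namespace COPcone

open SymMat

variable {n : ℕ} {A : SymMat n}

theorem mem_iff : A ∈ COPcone n ↔ ∀ x, 0 ≤ x → 0 ≤ eval x x A := Iff.rfl

theorem symProd_self_mem (u : Fin n → ℝ) : symProd u u ∈ COPcone n := mem_iff.2 fun x _ => by
  rw [eval_self_symProd_self]
  exact sq_nonneg _

theorem symProd_mem {u v : Fin n → ℝ} (hu : 0 ≤ u) (hv : 0 ≤ v) : symProd u v ∈ COPcone n :=
  mem_iff.2 fun x hx => by
    rw [eval_symProd, dotProduct_comm v, dotProduct_comm u]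
    have := mul_nonneg (dotProduct_nonneg_of_nonneg hx hu) (dotProduct_nonneg_of_nonneg hx hv)
    linarith

theorem lagrange_mem (x : Fin n → ℝ) : lagrange x ∈ COPcone n := mem_iff.2 fun y hy => by
  simp only [lagrange, map_sum]
  exact Finset.sum_nonneg fun i _ => Finset.sum_nonneg fun j _ => symProd_self_mem _ y hy

theorem congruence_mem {M : Matrix (Fin n) (Fin n) ℝ} (hM : ∀ i j, 0 ≤ M i j)
    (hA : A ∈ COPcone n) : congruence M A ∈ COPcone n := mem_iff.2 fun x hx => by
  rw [eval_congruence]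
  exact hA _ fun j => dotProduct_nonneg_of_nonneg hx fun i => hM i j

theorem mem_of_forall_norm_eq_one (h : ∀ x, 0 ≤ x → ‖x‖ = 1 → 0 ≤ eval x x A) :
    A ∈ COPcone n := mem_iff.2 fun x hx => by
  rcases eq_or_ne x 0 with rfl | hx₀
  · simp
  have hunit := h (‖x‖⁻¹ • x) (smul_nonneg (inv_nonneg.2 (norm_nonneg x)) hx)
    (norm_smul_inv_norm (𝕜 := ℝ) hx₀)
  rw [eval_self_smul, LinearMap.smul_apply, smul_eq_mul] at hunit
  exact nonneg_of_mul_nonneg_right hunit (by positivity)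

theorem exists_sub_smul_mem (hA : ∀ x, 0 ≤ x → x ≠ 0 → 0 < eval x x A) (B : SymMat n) :
    ∃ ε : ℝ, 0 < ε ∧ A - ε • B ∈ COPcone n := by
  set K : Set (Fin n → ℝ) := Set.Ici 0 ∩ Metric.sphere 0 1
  have hK : IsCompact K := (isCompact_sphere 0 1).inter_left isClosed_Ici
  have hcont (C : SymMat n) : ContinuousOn (fun x => eval x x C) K := by
    simp only [eval_apply]
    fun_prop
  obtain ⟨m, hm, hAm⟩ := hK.exists_forall_le' (hcont A) (a := 0) fun x ⟨hx, hx₁⟩ =>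
    hA x hx (ne_zero_of_mem_unit_sphere ⟨x, hx₁⟩)
  obtain ⟨b, hBb⟩ := hK.exists_bound_of_continuousOn (hcont B)
  have hb : 0 < |b| + 1 := by positivity
  refine ⟨m / (|b| + 1), div_pos hm hb, mem_of_forall_norm_eq_one fun x hx hx₁ => ?_⟩
  have hxK : x ∈ K := ⟨hx, mem_sphere_zero_iff_norm.2 hx₁⟩
  have hBx : eval x x B ≤ |b| + 1 := by
    linarith [Real.le_norm_self (eval x x B), hBb x hxK, le_abs_self b]
  rw [map_sub, map_smul, smul_eq_mul, sub_nonneg]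
  calc m / (|b| + 1) * eval x x B ≤ m / (|b| + 1) * (|b| + 1) := by gcongr
    _ = m := div_mul_cancel₀ m hb.ne'
    _ ≤ eval x x A := hAm x hxK

theorem span_eq_top : Submodule.span ℝ (COPcone n) = ⊤ := by
  rw [← Submodule.ker_mkQ (Submodule.span ℝ (COPcone n)), LinearMap.ker_eq_top]
  exact linearMap_ext fun i j => (Submodule.Quotient.mk_eq_zero _).2 <| Submodule.subset_span <|
    symProd_mem (Pi.single_nonneg.2 zero_le_one) (Pi.single_nonneg.2 zero_le_one)

theorem exists_linearEquiv_of_image_eq {L : SymMat n →ₗ[ℝ] SymMat n}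
    (hL : L '' COPcone n = COPcone n) :
    ∃ E : SymMat n ≃ₗ[ℝ] SymMat n, (E : SymMat n →ₗ[ℝ] SymMat n) = L ∧
      ∀ A, E A ∈ COPcone n ↔ A ∈ COPcone n := by
  have hsurj : Function.Surjective L := by
    rw [← LinearMap.range_eq_top, eq_top_iff, ← span_eq_top, Submodule.span_le, ← hL]
    exact Set.image_subset_range _ _
  have hinj : Function.Injective L := LinearMap.injective_iff_surjective.2 hsurj
  refine ⟨LinearEquiv.ofBijective L ⟨hinj, hsurj⟩, rfl, fun A => ?_⟩
  conv_lhs => rw [← hL]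
  exact hinj.mem_set_image

section Preserver

variable {L : SymMat n ≃ₗ[ℝ] SymMat n} {x x' y y' : Fin n → ℝ}

theorem exists_eval_symm_lagrange_eq_zero (hL : ∀ A, L A ∈ COPcone n ↔ A ∈ COPcone n)
    (hx : 0 ≤ x) (hx₀ : x ≠ 0) :
    ∃ y, 0 ≤ y ∧ y ≠ 0 ∧ eval y y (L.symm (lagrange x)) = 0 := by
  by_contra! hne
  have hmem : L.symm (lagrange x) ∈ COPcone n := by
    rw [← hL, L.apply_symm_apply]
    exact lagrange_mem x
  obtain ⟨ε, hε, hsub⟩ := exists_sub_smul_mem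
    (fun y hy hy₀ => (hmem y hy).lt_of_ne' (hne y hy hy₀)) (L.symm (symProd x x))
  rw [← hL, map_sub, map_smul, L.apply_symm_apply, L.apply_symm_apply] at hsub
  have hval := mem_iff.1 hsub x hx
  rw [map_sub, map_smul, eval_self_lagrange, eval_self_symProd_self, smul_eq_mul, zero_sub,
    neg_nonneg] at hval
  have hxx : x ⬝ᵥ x ≠ 0 := mt dotProduct_self_eq_zero.1 hx₀
  exact hval.not_gt (by positivity)

theorem exists_eval_self_apply_eq (hL : ∀ A, L A ∈ COPcone n ↔ A ∈ COPcone n)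
    (hx : 0 ≤ x) :
    ∃ y, 0 ≤ y ∧ ∀ A, eval x x (L A) = eval y y A := by
  rcases eq_or_ne x 0 with rfl | hx₀
  · exact ⟨0, le_rfl, fun A => by simp⟩
  obtain ⟨y, hy, hy₀, hyx⟩ := exists_eval_symm_lagrange_eq_zero hL hx hx₀
  have hnonneg (u : Fin n → ℝ) : 0 ≤ (eval y y ∘ₗ L.symm.toLinearMap) (symProd u u) := by
    refine mem_iff.1 ((hL _).1 ?_) y hy
    rw [LinearEquiv.coe_coe, L.apply_symm_apply]
    exact symProd_self_mem u
  obtain ⟨c, hc, hcx⟩ := exists_eq_smul_eval_of_apply_lagrange_eq_zero hx₀ hnonneg hyx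
  have hyL (A : SymMat n) : eval y y A = c * eval x x (L A) := by
    simpa using LinearMap.congr_fun hcx (L A)
  have hc₀ : c ≠ 0 := by
    rintro rfl
    exact eval_self_ne_zero hy₀ (LinearMap.ext fun A => by simp [hyL])
  refine ⟨(√c)⁻¹ • y, smul_nonneg (by positivity) hy, fun A => ?_⟩
  rw [eval_self_smul, LinearMap.smul_apply, hyL, inv_pow, Real.sq_sqrt hc, smul_eq_mul,
    inv_mul_cancel_left₀ hc₀]

theorem linearIndependent_pair_of_eval_self_apply_eq (hxx' : LinearIndependent ℝ ![x, x'])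
    (hxy : ∀ A, eval x x (L A) = eval y y A) (hxy' : ∀ A, eval x' x' (L A) = eval y' y' A) :
    LinearIndependent ℝ ![y, y'] := by
  refine LinearIndependent.pair_iff.2 fun s t hst => ?_
  have hsq (u : Fin n → ℝ) : s ^ 2 * (x ⬝ᵥ u) ^ 2 = t ^ 2 * (x' ⬝ᵥ u) ^ 2 := by
    have heval := eval_self_smul s y
    rw [eq_neg_of_add_eq_zero_left hst, ← neg_smul, eval_self_smul, neg_sq] at heval
    simpa [← hxy, ← hxy', eval_self_symProd_self] using
      (LinearMap.congr_fun heval (L.symm (symProd u u))).symm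
  have hdual : LinearIndependent ℝ ![dotProductEquiv ℝ (Fin n) x, dotProductEquiv ℝ (Fin n) x'] :=
    linearIndependent_pair_dotProductEquiv.2 hxx'
  obtain ⟨u, hu⟩ := surjective_pi_of_linearIndependent hdual ![1, 0]
  obtain ⟨v, hv⟩ := surjective_pi_of_linearIndependent hdual ![0, 1]
  have hxu : x ⬝ᵥ u = 1 := congrFun hu 0
  have hxu' : x' ⬝ᵥ u = 0 := congrFun hu 1
  have hxv : x ⬝ᵥ v = 0 := congrFun hv 0
  have hxv' : x' ⬝ᵥ v = 1 := congrFun hv 1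
  exact ⟨by simpa [hxu, hxu'] using hsq u, by simpa [hxv, hxv'] using (hsq v).symm⟩

theorem exists_sign_eval_apply_eq (hL : ∀ A, L A ∈ COPcone n ↔ A ∈ COPcone n)
    (hx : 0 ≤ x) (hx' : 0 ≤ x') (hxx' : LinearIndependent ℝ ![x, x'])
    (hxy : ∀ A, eval x x (L A) = eval y y A) (hxy' : ∀ A, eval x' x' (L A) = eval y' y' A) :
    ∃ ε : ℝ, ε * ε = 1 ∧ ∀ A, eval x x' (L A) = ε * eval y y' A := by
  have hyy' : LinearIndependent ℝ ![dotProductEquiv ℝ (Fin n) y, dotProductEquiv ℝ (Fin n) y'] :=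
    linearIndependent_pair_dotProductEquiv.2
      (linearIndependent_pair_of_eval_self_apply_eq hxx' hxy hxy')
  have hpencil (t : ℝ) (ht : 0 < t) : ∃ ω : (Fin n → ℝ) → ℝ, ∀ u v,
      (y ⬝ᵥ u) * (y ⬝ᵥ v) + t * (2 * eval x x' (L (symProd u v))) +
        t ^ 2 * ((y' ⬝ᵥ u) * (y' ⬝ᵥ v)) = ω u * ω v := by
    obtain ⟨z, -, hz⟩ := exists_eval_self_apply_eq hL (add_nonneg hx (smul_nonneg ht.le hx'))
    refine ⟨(z ⬝ᵥ ·), fun u v => ?_⟩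
    have hzuv := hz (symProd u v)
    simp only [eval_self_add, map_smul, LinearMap.add_apply, LinearMap.smul_apply, hxy, hxy',
      eval_symProd, smul_eq_mul, nsmul_eq_mul, Nat.cast_ofNat, dotProduct_comm _ y,
      dotProduct_comm _ y', dotProduct_comm _ z] at hzuv
    linear_combination hzuv
  obtain ⟨ε, hε, hcross⟩ := exists_sign_of_rankOne_pencil hyy' hpencil
  refine ⟨ε, hε, LinearMap.congr_fun (f := eval x x' ∘ₗ L.toLinearMap) (g := ε • eval y y')
    (linearMap_ext fun k l => ?_)⟩
  have hkl := hcross (Pi.single k 1) (Pi.single l 1)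
  simp only [dotProductEquiv_apply_apply, LinearMap.comp_apply, LinearMap.smul_apply, smul_eq_mul,
    LinearEquiv.coe_coe, eval_symProd, dotProduct_comm _ y'] at hkl ⊢
  linarith

theorem eval_single_apply_eq {M : Matrix (Fin n) (Fin n) ℝ}
    (hL : ∀ A, L A ∈ COPcone n ↔ A ∈ COPcone n) (hM : ∀ k l, 0 ≤ M k l)
    (hdiag : ∀ k A, eval (Pi.single k 1) (Pi.single k 1) (L A) = eval (M k) (M k) A)
    (i j : Fin n) (A : SymMat n) :
    eval (Pi.single i 1) (Pi.single j 1) (L A) = eval (M i) (M j) A := by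
  rcases eq_or_ne i j with rfl | hij
  · exact hdiag i A
  have hindep : LinearIndependent ℝ ![(Pi.single i 1 : Fin n → ℝ), Pi.single j 1] :=
    LinearIndependent.pair_iff.2 fun s t h =>
      ⟨by simpa [hij] using congrFun h i, by simpa [hij.symm] using congrFun h j⟩
  obtain ⟨ε, hε, hεA⟩ := exists_sign_eval_apply_eq hL (Pi.single_nonneg.2 zero_le_one)
    (Pi.single_nonneg.2 zero_le_one) hindep (hdiag i) (hdiag j)
  set B := L.symm (symProd (Pi.single i 1) (Pi.single j 1)) with hB
  have hBmem : B ∈ COPcone n := by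
    rw [← hL, hB, L.apply_symm_apply]
    exact symProd_mem (Pi.single_nonneg.2 zero_le_one) (Pi.single_nonneg.2 zero_le_one)
  have hii : eval (M i) (M i) B = 0 := by
    simp [← hdiag, hB, eval_symProd, hij]
  have hjj : eval (M j) (M j) B = 0 := by
    simp [← hdiag, hB, eval_symProd, hij.symm]
  have hij_nonneg : 0 ≤ eval (M i) (M j) B := by
    have hsum := mem_iff.1 hBmem (M i + M j) (add_nonneg (hM i) (hM j))
    rw [eval_self_add] at hsum
    simpa [hii, hjj] using hsum
  have hεB : 1 / 2 = ε * eval (M i) (M j) B := by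
    rw [← hεA, hB, L.apply_symm_apply, eval_symProd]
    simp [hij]
  rw [hεA, (mul_self_eq_one_iff.1 hε).resolve_right (by rintro rfl; linarith), one_mul]

theorem exists_eq_congruence (hL : ∀ A, L A ∈ COPcone n ↔ A ∈ COPcone n) :
    ∃ M : Matrix (Fin n) (Fin n) ℝ, (∀ i j, 0 ≤ M i j) ∧
      (L : SymMat n →ₗ[ℝ] SymMat n) = congruence M := by
  choose M hM hdiag using fun i : Fin n =>
    exists_eval_self_apply_eq hL (x := Pi.single i 1) (Pi.single_nonneg.2 zero_le_one)
  refine ⟨of M, hM, ?_⟩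
  ext A i j
  rw [← eval_single, ← eval_single, eval_congruence, single_one_vecMul, single_one_vecMul]
  exact eval_single_apply_eq hL hM hdiag i j A

end Preserver

theorem exists_isMonomial_of_image_eq {L : SymMat n →ₗ[ℝ] SymMat n}
    (hL : L '' COPcone n = COPcone n) :
    ∃ M : Matrix (Fin n) (Fin n) ℝ, (∀ i j, 0 ≤ M i j) ∧ IsMonomial M ∧ L = congruence M := by
  obtain ⟨E, rfl, hE⟩ := exists_linearEquiv_of_image_eq hL
  obtain ⟨M, hM, hEM⟩ := exists_eq_congruence hE
  obtain ⟨N, hN, hEN⟩ := exists_eq_congruence (L := E.symm) fun A => by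
    simpa using (hE (E.symm A)).symm
  have hMN : M * N = 1 := eq_one_of_congruence_eq_id
    (fun i j => dotProduct_nonneg_of_nonneg (hM i) (hN · j))
    (by rw [congruence_mul, ← hEM, ← hEN, E.comp_symm])
  exact ⟨M, hM, .of_mul_eq_one hM hN hMN, hEM⟩

theorem image_congruence {M : Matrix (Fin n) (Fin n) ℝ} (hM : ∀ i j, 0 ≤ M i j)
    (hmon : IsMonomial M) : congruence M '' COPcone n = COPcone n := by
  have hN (i j) : 0 ≤ Mᵀ.map (·⁻¹) i j := inv_nonneg.2 (hM j i)
  have hcomp : congruence M ∘ₗ congruence (Mᵀ.map (·⁻¹)) = LinearMap.id := by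
    rw [← congruence_mul, hmon.mul_transpose_map_inv, congruence_one]
  refine (Set.image_subset_iff.2 fun A => congruence_mem hM).antisymm fun A hA => ?_
  exact ⟨congruence (Mᵀ.map (·⁻¹)) A, congruence_mem hN hA, LinearMap.congr_fun hcomp A⟩

end COPcone

theorem stmt_0 {n : ℕ} (L : SymMat n →ₗ[ℝ] SymMat n) :
    (L '' COPcone n = COPcone n) ↔
      ∃ M : Matrix (Fin n) (Fin n) ℝ, (∀ i j, 0 ≤ M i j) ∧ IsMonomial M ∧
        ∀ A : SymMat n,
          (L A : Matrix (Fin n) (Fin n) ℝ) = M * (A : Matrix (Fin n) (Fin n) ℝ) * Mᵀ := by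
  constructor
  · intro hL
    obtain ⟨M, hM, hmon, rfl⟩ := COPcone.exists_isMonomial_of_image_eq hL
    exact ⟨M, hM, hmon, SymMat.coe_congruence M⟩
  · rintro ⟨M, hM, hmon, hLM⟩
    obtain rfl : L = SymMat.congruence M := LinearMap.ext fun A => Subtype.ext (hLM A)
    exact COPcone.image_congruence hM hmon
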